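/- Let m ≥ 2, let α₁,…,α_{m−1}, β₁,…,β_m be real numbers, let 0 < η₁ < η₂ < … < η_m ≤ 1, set μ = 1 − (∑_{i=1}^{m−1} αᵢ(η_{i+1} − ηᵢ) + ∑_{i=1}^{m} βᵢ), and assume μ ≠ 0. Let p : [0,1] → ℝ be continuous and g : ℝ → ℝ be continuous with lim_{|u|→∞} g(u)/u = γ for some real γ, and suppose there exists t₀ ∈ (0,1] with p(t₀) g(0) ≠ 0. Set p* = max_{t∈[0,1]} |p(t)| and M = p* (1 + (1/|μ|) ∑_{i=1}^{m−1} |αᵢ|(η_{i+1} − ηᵢ) + (1/|μ|) ∑_{i=1}^{m} |βᵢ|) ∫₀¹ G(1,s) ds, and assume |γ| < 1/M. Then there exists a six times continuously differentiable function u : [0,1] → ℝ, not identically zero, such that u⁽⁶⁾(t) + p(t) g(u(t)) = 0 for all t ∈ (0,1), u′(0) = u″(0) = u‴(0) = u⁽⁴⁾(0) = 0, u″(1) = 0, and u(0) = ∑_{i=1}^{m−1} αᵢ ∫_{ηᵢ}^{η_{i+1}} u(s) ds + ∑_{i=1}^{m} βᵢ u(ηᵢ). -/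

import Mathlib

open Set intervalIntegral Filter

/-- Green's function `G(t,s)` for the sixth-order problem. -/
noncomputable def G (t s : ℝ) : ℝ :=
  if s ≤ t then (t ^ 5 * (1 - s) ^ 3 - (t - s) ^ 5) / 120
  else t ^ 5 * (1 - s) ^ 3 / 120


section Brouwer

open MeasureTheory Metric Topology

variable {E : Type*} [NormedAddCommGroup E] [InnerProductSpace ℝ E] [FiniteDimensional ℝ E]

/-- Extrapolation of polynomials of bounded degree from small nodes to `1`. -/
lemma extrapolate (n : ℕ) (δ : ℝ) (hδ : 0 < δ) :
    ∃ (c t : ℕ → ℝ), (∀ j, 0 < t j ∧ t j ≤ δ) ∧ ∀ P : Polynomial ℝ, P.natDegree ≤ n →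
      P.eval 1 = ∑ j ∈ Finset.range (n + 1), c j * P.eval (t j) := by
  let t : ℕ → ℝ := fun j => δ / (j + 1)
  have hinj : Function.Injective t := by
    intro a b hab
    have ha : (0 : ℝ) < a + 1 := by positivity
    have hb : (0 : ℝ) < b + 1 := by positivity
    simp only [t] at hab
    field_simp at hab
    have : (b : ℝ) = a := by linarith
    exact_mod_cast this.symm
  refine ⟨fun j => (Lagrange.basis (Finset.range (n + 1)) t j).eval 1, t, ?_, ?_⟩
  · intro j
    refine ⟨by positivity, ?_⟩
    apply div_le_self hδ.le
    have : (0 : ℝ) ≤ j := by positivity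
    linarith
  · intro P hP
    have hdeg : P.degree < ((Finset.range (n + 1)).card : WithBot ℕ) := by
      rw [Finset.card_range]
      refine lt_of_le_of_lt Polynomial.degree_le_natDegree ?_
      exact_mod_cast Nat.lt_succ_of_le hP
    have h := Lagrange.eq_interpolate (s := Finset.range (n + 1)) (v := t) hinj.injOn hdeg
    conv_lhs => rw [h]
    rw [Lagrange.interpolate_apply, Polynomial.eval_finsetSum]
    refine Finset.sum_congr rfl fun j _ => ?_
    simp [mul_comm]

lemma det_poly (A : E →L[ℝ] E) :
    ∃ P : Polynomial ℝ, P.natDegree ≤ Module.finrank ℝ E ∧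
      ∀ t : ℝ, P.eval t = (ContinuousLinearMap.id ℝ E + t • A).det := by
  classical
  let b := Module.finBasis ℝ E
  let M := LinearMap.toMatrix b b (A : E →ₗ[ℝ] E)
  refine ⟨((Polynomial.X : Polynomial ℝ) • M.map Polynomial.C + (1 : Matrix (Fin (Module.finrank ℝ E)) (Fin (Module.finrank ℝ E)) ℝ).map Polynomial.C).det, ?_, ?_⟩
  · simpa using Polynomial.natDegree_det_X_add_C_le M 1
  · intro t
    have hmat : LinearMap.toMatrix b b ((ContinuousLinearMap.id ℝ E + t • A : E →L[ℝ] E) : E →ₗ[ℝ] E)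
        = 1 + t • M := by
      have : ((ContinuousLinearMap.id ℝ E + t • A : E →L[ℝ] E) : E →ₗ[ℝ] E)
        = LinearMap.id + t • (A : E →ₗ[ℝ] E) := rfl
      rw [this, map_add, map_smul, LinearMap.toMatrix_id]
    rw [ContinuousLinearMap.det, ← LinearMap.det_toMatrix b, hmat,
      ← Polynomial.coe_evalRingHom, RingHom.map_det]
    congr 1
    ext i j
    simp [Matrix.one_apply, add_comm]
    split_ifs <;> simp [mul_comm]

lemma det_pos_of_small (A : E →L[ℝ] E) (t : ℝ) (ht : 0 ≤ t) (h : t * ‖A‖ < 1) :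
    0 < (ContinuousLinearMap.id ℝ E + t • A).det := by
  have hne : ∀ s ∈ Icc 0 t, (ContinuousLinearMap.id ℝ E + s • A).det ≠ 0 := by
    intro s hs h0
    have h1 := LinearMap.bot_lt_ker_of_det_eq_zero
      (f := ((ContinuousLinearMap.id ℝ E + s • A : E →L[ℝ] E) : E →ₗ[ℝ] E)) h0
    obtain ⟨v, hv, hv0⟩ := (Submodule.ne_bot_iff _).1 h1.ne'
    have hv1 : v + s • A v = 0 := by simpa using hv
    have hv2 : v = - (s • A v) := eq_neg_of_add_eq_zero_left hv1
    have hn : ‖v‖ = s * ‖A v‖ := by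
      conv_lhs => rw [hv2]
      rw [norm_neg, norm_smul, Real.norm_of_nonneg hs.1]
    have hpos : 0 < ‖v‖ := norm_pos_iff.2 hv0
    have h2 : s * ‖A v‖ ≤ t * ‖A‖ * ‖v‖ := by
      rw [mul_assoc]
      exact mul_le_mul hs.2 (A.le_opNorm v) (norm_nonneg _) ht
    nlinarith
  have hc : ContinuousOn (fun s : ℝ => (ContinuousLinearMap.id ℝ E + s • A).det) (Icc 0 t) := by
    apply Continuous.continuousOn
    exact ContinuousLinearMap.continuous_det.comp (by fun_prop)
  by_contra hle
  push Not at hle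
  have := intermediate_value_Icc' ht hc
  obtain ⟨s, hs, h0⟩ := this (show (0 : ℝ) ∈ _ from ⟨hle, by
    simp [ContinuousLinearMap.det]⟩)
  exact hne s hs h0

lemma no_retraction [MeasurableSpace E] [BorelSpace E] (r : E → E)
    (hr : ∀ x ∈ closedBall (0 : E) 1, ContDiffAt ℝ 1 r x)
    (hr1 : ∀ x ∈ closedBall (0 : E) 1, ‖r x‖ = 1)
    (hrS : ∀ x : E, ‖x‖ = 1 → r x = x) : False := by
  set B := closedBall (0 : E) 1 with hB
  have hBc : IsCompact B := isCompact_closedBall _ _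
  let h : E → E := fun x => r x - x
  have hh : ∀ x ∈ B, ContDiffAt ℝ 1 h x := fun x hx => (hr x hx).sub contDiffAt_id
  let A : E → E →L[ℝ] E := fderiv ℝ h
  have hAs : ∀ x ∈ B, HasStrictFDerivAt h (A x) x := fun x hx =>
    (hh x hx).hasStrictFDerivAt one_ne_zero
  have hAc : ContinuousOn A B := fun x hx =>
    ((hh x hx).continuousAt_fderiv one_ne_zero).continuousWithinAt
  obtain ⟨K, hK⟩ := hBc.exists_bound_of_continuousOn hAc
  have h0B : (0 : E) ∈ B := by simp [hB]
  have hK0 : 0 ≤ K := (norm_nonneg _).trans (hK 0 h0B)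
  have hLip : ∀ x ∈ B, ∀ y ∈ B, ‖h y - h x‖ ≤ K * ‖y - x‖ := fun x hx y hy =>
    Convex.norm_image_sub_le_of_norm_hasFDerivWithin_le
      (fun z hz => (hAs z hz).hasFDerivAt.hasFDerivWithinAt) hK (convex_closedBall _ _) hx hy
  let D : ℝ → E → ℝ := fun t x => (ContinuousLinearMap.id ℝ E + t • A x).det
  have hDc : ∀ t, ContinuousOn (D t) B := fun t =>
    ContinuousLinearMap.continuous_det.comp_continuousOn
      (continuousOn_const.add (hAc.const_smul t))
  have hDi : ∀ t, IntegrableOn (D t) B := fun t => (hDc t).integrableOn_compact hBc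
  -- volume is preserved for small t
  set δ : ℝ := 1 / (2 * (K + 1)) with hδ
  have hδ0 : 0 < δ := by positivity
  have hδK : δ * K ≤ 1 / 2 := by
    rw [hδ]; rw [div_mul_eq_mul_div, div_le_div_iff₀ (by positivity) (by norm_num)]; linarith
  have hδ1 : δ ≤ 1 / 2 := by
    rw [hδ]; rw [div_le_div_iff₀ (by positivity) (by norm_num)]; linarith
  have hvol : ∀ t, 0 < t → t ≤ δ → ∫ x in B, D t x = ∫ x in B, (1 : ℝ) := by
    intro t ht htδ
    let F : E → E := fun x => x + t • h x
    have hF : ∀ x ∈ B, HasStrictFDerivAt F (ContinuousLinearMap.id ℝ E + t • A x) x :=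
      fun x hx => (hasStrictFDerivAt_id x).add ((hAs x hx).const_smul t)
    have htK : t * K ≤ 1 / 2 := (mul_le_mul_of_nonneg_right htδ hK0).trans hδK
    have hpos : ∀ x ∈ B, 0 < D t x := fun x hx => det_pos_of_small _ _ ht.le (by
      have := mul_le_mul_of_nonneg_left (hK x hx) ht.le
      linarith)
    have hinj : InjOn F B := by
      intro x hx y hy hxy
      have h1 : y - x = - (t • (h y - h x)) := by
        simp only [F] at hxy
        rw [smul_sub, neg_sub]
        rw [sub_eq_sub_iff_add_eq_add, add_comm (t • h x), hxy]
      have h2 : ‖y - x‖ ≤ t * (K * ‖y - x‖) := by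
        conv_lhs => rw [h1]
        rw [norm_neg, norm_smul, Real.norm_of_nonneg ht.le]
        exact mul_le_mul_of_nonneg_left (hLip x hx y hy) ht.le
      have h3 : ‖y - x‖ ≤ 0 := by
        have := norm_nonneg (y - x)
        nlinarith
      exact (sub_eq_zero.1 (norm_le_zero_iff.1 h3)).symm
    have hFS : ∀ x, ‖x‖ = 1 → F x = x := by
      intro x hx
      simp [F, h, hrS x hx]
    have hmaps : ∀ x ∈ B, F x ∈ B := by
      intro x hx
      have : F x = (1 - t) • x + t • r x := by
        simp only [F, h]; module
      rw [this]
      refine (convex_closedBall (0 : E) 1) hx ?_ (by linarith) ht.le (by ring)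
      simp [hr1 x hx]
    have himg : F '' B = B := by
      apply Subset.antisymm
      · rintro _ ⟨x, hx, rfl⟩; exact hmaps x hx
      · have hop : IsOpen (F '' ball 0 1) := by
          rw [isOpen_iff_mem_nhds]
          rintro _ ⟨x, hx, rfl⟩
          have hxB : x ∈ B := ball_subset_closedBall hx
          have hsurj : ((ContinuousLinearMap.id ℝ E + t • A x : E →L[ℝ] E) : E →ₗ[ℝ] E).range
              = ⊤ := by
            rw [← LinearMap.ker_eq_bot_iff_range_eq_top]
            by_contra hk
            exact (hpos x hxB).ne' (LinearMap.det_eq_zero_iff_ker_ne_bot.2 hk)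
          rw [← (hF x hxB).map_nhds_eq_of_surj hsurj]
          exact image_mem_map (isOpen_ball.mem_nhds hx)
        have hFc : ContinuousOn F B := fun x hx =>
          (hF x hx).hasFDerivAt.continuousAt.continuousWithinAt
        have hcl : IsClosed (F '' B) := (hBc.image_of_continuousOn hFc).isClosed
        have hsub : ball (0 : E) 1 ⊆ F '' ball 0 1 := by
          refine IsPreconnected.subset_left_of_subset_union hop hcl.isOpen_compl ?_ ?_ ?_
            (convex_ball (0 : E) 1).isPreconnected
          · rw [disjoint_compl_right_iff_subset]
            exact image_mono ball_subset_closedBall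
          · intro y hy
            by_cases hyF : y ∈ F '' B
            · left
              obtain ⟨x, hx, rfl⟩ := hyF
              refine ⟨x, ?_, rfl⟩
              rw [mem_ball_zero_iff]
              refine lt_of_le_of_ne (by simpa [hB] using hx) fun h1 => ?_
              rw [hFS x h1, mem_ball_zero_iff] at hy
              exact hy.ne h1
            · exact Or.inr hyF
          · refine ⟨F 0, ?_, mem_image_of_mem _ (by simp)⟩
            rw [mem_ball_zero_iff]
            simp only [F, h, sub_zero, zero_add, norm_smul, hr1 0 h0B, mul_one]
            rw [Real.norm_of_nonneg ht.le]; linarith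
        intro y hy
        rcases (show ‖y‖ ≤ 1 by simpa [hB] using hy).lt_or_eq with h1 | h1
        · exact image_mono ball_subset_closedBall (hsub (by simpa using h1))
        · exact ⟨y, hy, hFS y h1⟩
    have := integral_image_eq_integral_abs_det_fderiv_smul (volume : Measure E)
      (s := B) (f := F) (f' := fun x => ContinuousLinearMap.id ℝ E + t • A x)
      isClosed_closedBall.measurableSet
      (fun x hx => (hF x hx).hasFDerivAt.hasFDerivWithinAt) hinj (fun _ => (1 : ℝ))
    rw [himg] at this
    rw [this]
    refine setIntegral_congr_fun isClosed_closedBall.measurableSet fun x hx => ?_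
    simp only [smul_eq_mul, mul_one]
    exact (abs_of_pos (hpos x hx)).symm
  obtain ⟨c, t, ht, hct⟩ := extrapolate (Module.finrank ℝ E) δ hδ0
  have hD1 : ∀ x, D 1 x = ∑ j ∈ Finset.range (Module.finrank ℝ E + 1), c j * D (t j) x := by
    intro x
    obtain ⟨P, hP, hPe⟩ := det_poly (A x)
    simp only [D, ← hPe]
    exact hct P hP
  have hsumc : ∑ j ∈ Finset.range (Module.finrank ℝ E + 1), c j = 1 := by
    have := hct 1 (by simp)
    simpa using this.symm
  have hint1 : ∫ x in B, D 1 x = ∫ x in B, (1 : ℝ) := by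
    simp_rw [hD1]
    rw [integral_finsetSum _ (fun j _ => ((hDi (t j)).const_mul (c j)))]
    simp_rw [MeasureTheory.integral_const_mul]
    rw [Finset.sum_congr rfl (fun j _ => by rw [hvol (t j) (ht j).1 (ht j).2]),
      ← Finset.sum_mul, hsumc, one_mul]
  -- the determinant of the derivative of the retraction vanishes
  have hD0 : ∀ x ∈ ball (0 : E) 1, D 1 x = 0 := by
    intro x hx
    have hxB : x ∈ B := ball_subset_closedBall hx
    have hrd : HasFDerivAt r (ContinuousLinearMap.id ℝ E + (1 : ℝ) • A x) x := by
      have := (hasFDerivAt_id x).add ((hAs x hxB).hasFDerivAt)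
      rw [one_smul]
      refine this.congr_of_eventuallyEq (Eventually.of_forall fun y => ?_)
      simp [h]
    have hsq : HasFDerivAt (fun y => ‖r y‖ ^ 2) _ x := hrd.norm_sq
    have hconst : HasFDerivAt (fun y => ‖r y‖ ^ 2) (0 : E →L[ℝ] ℝ) x := by
      refine (hasFDerivAt_const (1 : ℝ) x).congr_of_eventuallyEq ?_
      filter_upwards [isOpen_ball.mem_nhds hx] with y hy
      rw [hr1 y (ball_subset_closedBall hy)]; norm_num
    have heq := hsq.unique hconst
    by_contra hne
    have hker : ((ContinuousLinearMap.id ℝ E + (1 : ℝ) • A x : E →L[ℝ] E) : E →ₗ[ℝ] E).ker = ⊥ := by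
      by_contra hk
      exact hne (LinearMap.det_eq_zero_iff_ker_ne_bot.2 hk)
    have hsurj := LinearMap.range_eq_top.1 (LinearMap.ker_eq_bot_iff_range_eq_top.1 hker)
    obtain ⟨v, hv⟩ := hsurj (r x)
    have h1 := congrArg (fun L : E →L[ℝ] ℝ => L v) heq
    have hv' : (ContinuousLinearMap.id ℝ E + (1 : ℝ) • A x) v = r x := hv
    simp only [smul_apply, ContinuousLinearMap.comp_apply, hv',
      innerSL_apply_apply, real_inner_self_eq_norm_sq, hr1 x hxB] at h1
    norm_num at h1
  have hint0 : ∫ x in B, D 1 x = 0 := by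
    apply integral_eq_zero_of_ae
    rw [EventuallyEq, ae_restrict_iff' isClosed_closedBall.measurableSet]
    have hS : (sphere (0 : E) 1)ᶜ ∈ ae (volume : Measure E) :=
      compl_mem_ae_iff.2 (Measure.addHaar_sphere_of_ne_zero _ _ one_ne_zero)
    filter_upwards [hS] with x hx hxB
    refine hD0 x ?_
    rw [mem_ball_zero_iff]
    refine lt_of_le_of_ne (by simpa [hB] using hxB) fun h1 => hx (by simpa using h1)
  rw [hint0] at hint1
  have hvB : (0 : ℝ) < (volume : Measure E).real B := by
    rw [measureReal_def]
    exact ENNReal.toReal_pos (measure_closedBall_pos _ _ one_pos).ne' hBc.measure_lt_top.ne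
  simp at hint1
  exact hvB.ne hint1


lemma brouwer_smooth (q : E → E) (hq : ContDiff ℝ 1 q) (hq1 : ∀ x, ‖q x‖ < 1)
    (hfix : ∀ x, q x ≠ x) : False := by
  borelize E
  let u : E → E := fun x => x - q x
  let d : E → ℝ := fun x => (inner ℝ x (u x)) ^ 2 + ‖u x‖ ^ 2 * (1 - ‖x‖ ^ 2)
  have hu : ContDiff ℝ 1 u := contDiff_id.sub hq
  have hd : ContDiff ℝ 1 d :=
    ((contDiff_id.inner ℝ hu).pow 2).add ((hu.norm_sq ℝ).mul (contDiff_const.sub (contDiff_id.norm_sq ℝ)))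
  have hu0 : ∀ x, 0 < ‖u x‖ := fun x => norm_pos_iff.2 (sub_ne_zero.2 (hfix x).symm)
  have hin : ∀ x : E, ‖x‖ = 1 → 0 < inner ℝ x (u x) := by
    intro x hx
    simp only [u, inner_sub_right, real_inner_self_eq_norm_sq, hx]
    have := real_inner_le_norm x (q x)
    have := hq1 x
    rw [hx] at *
    linarith
  have hdpos : ∀ x ∈ closedBall (0 : E) 1, 0 < d x := by
    intro x hx
    rw [mem_closedBall_zero_iff] at hx
    rcases hx.lt_or_eq with h1 | h1
    · have h2 : 0 < 1 - ‖x‖ ^ 2 := by nlinarith [norm_nonneg x]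
      have := mul_pos (pow_pos (hu0 x) 2) h2
      simp only [d]; positivity
    · simp only [d, h1]
      have := pow_pos (hin x h1) 2
      simpa using this
  refine no_retraction (E := E)
    (fun x => x + ((-(inner ℝ x (u x)) + √(d x)) / ‖u x‖ ^ 2) • u x) ?_ ?_ ?_
  · intro x hx
    have h1 : ContDiffAt ℝ 1 (fun x => √(d x)) x := hd.contDiffAt.sqrt (hdpos x hx).ne'
    have h2 : ContDiffAt ℝ 1 (fun x => (inner ℝ x (u x) : ℝ)) x :=
      (contDiff_id.inner ℝ hu).contDiffAt
    exact contDiffAt_id.add ((((h2.neg).add h1).div (hu.norm_sq ℝ).contDiffAt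
      (pow_pos (hu0 x) 2).ne').smul hu.contDiffAt)
  · intro x hx
    have hsq := Real.sq_sqrt (hdpos x hx).le
    have ha := pow_pos (hu0 x) 2
    rw [← sq_eq_sq₀ (norm_nonneg _) zero_le_one, norm_add_sq_real, norm_smul, mul_pow,
      real_inner_smul_right, Real.norm_eq_abs, sq_abs]
    generalize √(d x) = z at *
    simp only [d] at hsq
    have hane := (hu0 x).ne'
    field_simp
    linear_combination hsq
  · intro x hx
    have : d x = (inner ℝ x (u x)) ^ 2 := by simp [d, hx]
    simp [this, Real.sqrt_sq (hin x hx).le]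

theorem brouwer (f : E → E) (hf : Continuous f) (hf1 : ∀ x, ‖f x‖ ≤ 1) : ∃ x, f x = x := by
  by_contra hno
  push Not at hno
  obtain ⟨x₀, -, hx₀⟩ := (isCompact_closedBall (0 : E) 1).exists_isMinOn ⟨0, by simp⟩
    (show ContinuousOn (fun x => ‖x - f x‖) _ by fun_prop)
  set δ := ‖x₀ - f x₀‖ with hδ
  have hδ0 : 0 < δ := norm_pos_iff.2 (sub_ne_zero.2 (hno x₀).symm)
  set ε := δ / 4 with hε
  have hε0 : 0 < ε := by positivity
  obtain ⟨q, hq, hqd, -⟩ := hf.exists_contDiff_approx (ε := fun _ => ε) 1 continuous_const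
    (fun _ => hε0)
  have hqn : ∀ x, ‖q x‖ < 1 + ε := by
    intro x
    have h1 := hqd x
    rw [dist_eq_norm] at h1
    have h2 := norm_le_norm_add_norm_sub' (q x) (f x)
    have := hf1 x
    linarith
  have hpos : 0 < 1 + ε := by positivity
  have hq'n : ∀ x, ‖(1 + ε)⁻¹ • q x‖ < 1 := by
    intro x
    rw [norm_smul, Real.norm_of_nonneg (by positivity), inv_mul_lt_one₀ hpos]
    exact hqn x
  refine brouwer_smooth (fun x => (1 + ε)⁻¹ • q x) (contDiff_const.smul hq) hq'n ?_
  intro x hx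
  have hxn : ‖x‖ < 1 := by rw [← hx]; exact hq'n x
  have hmin : δ ≤ ‖x - f x‖ := hx₀ (show x ∈ closedBall (0 : E) 1 by simpa using hxn.le)
  have hqx : q x = (1 + ε) • x := by
    rw [← hx, smul_smul, mul_inv_cancel₀ hpos.ne', one_smul]
    simp only [hx]
  have h1 := hqd x
  rw [dist_eq_norm, hqx] at h1
  have h2 : x - f x = ((1 + ε) • x - f x) - ε • x := by module
  have h3 := norm_sub_le ((1 + ε) • x - f x) (ε • x)
  rw [← h2, norm_smul, Real.norm_of_nonneg hε0.le] at h3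
  nlinarith

theorem schauder {X : Type*} [NormedAddCommGroup X] [NormedSpace ℝ X] (T : X → X)
    (hT : Continuous T) (K : Set X) (hK : IsCompact K) (hTK : ∀ x, T x ∈ K) : ∃ x, T x = x := by
  have key : ∀ ε : ℝ, 0 < ε → ∃ x, ‖x - T x‖ ≤ ε := by
    intro ε hε
    obtain ⟨s, -, hs⟩ := hK.finite_cover_balls hε
    obtain ⟨hsf, hcov⟩ := hs
    have : Fintype s := hsf.fintype
    let φ : X → s → ℝ := fun x i => max 0 (ε - ‖x - i‖)
    have hφ0 : ∀ x i, 0 ≤ φ x i := fun x i => le_max_left _ _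
    have hφc : ∀ i, Continuous fun x => φ x i := fun i => by
      simp only [φ]; fun_prop
    have hS : ∀ x ∈ K, 0 < ∑ i, φ x i := by
      intro x hx
      obtain ⟨i, hi, hxi⟩ := mem_iUnion₂.1 (hcov hx)
      refine Finset.sum_pos' (fun i _ => hφ0 x i) ⟨⟨i, hi⟩, Finset.mem_univ _, ?_⟩
      rw [mem_ball, dist_eq_norm] at hxi
      exact lt_max_of_lt_right (by simpa using hxi)
    let σ : EuclideanSpace ℝ s → X := fun w => T (∑ i, w i • (i : X))
    have hσ : Continuous σ := hT.comp (by fun_prop)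
    let F : EuclideanSpace ℝ s → EuclideanSpace ℝ s := fun w =>
      WithLp.toLp 2 (fun i => φ (σ w) i / ∑ j, φ (σ w) j)
    have hFc : Continuous F := by
      refine (PiLp.continuous_toLp 2 _).comp (continuous_pi fun i => ?_)
      refine Continuous.div ((hφc i).comp hσ) ?_ (fun w => (hS _ (hTK _)).ne')
      exact continuous_finsetSum _ fun j _ => (hφc j).comp hσ
    have hF0 : ∀ w i, 0 ≤ F w i := fun w i => div_nonneg (hφ0 _ _) (hS _ (hTK _)).le
    have hFs : ∀ w, ∑ i, F w i = 1 := by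
      intro w
      simp only [F]
      rw [← Finset.sum_div, div_self (hS _ (hTK _)).ne']
    have hF1 : ∀ w, ‖F w‖ ≤ 1 := by
      intro w
      rw [EuclideanSpace.norm_eq, Real.sqrt_le_one]
      calc ∑ i, ‖F w i‖ ^ 2 ≤ ∑ i, F w i := by
            refine Finset.sum_le_sum fun i _ => ?_
            have h1 : F w i ≤ 1 := by
              rw [← hFs w]
              exact Finset.single_le_sum (fun j _ => hF0 w j) (Finset.mem_univ i)
            rw [Real.norm_of_nonneg (hF0 w i)]
            nlinarith [hF0 w i]
        _ = 1 := hFs w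
    obtain ⟨w, hw⟩ := brouwer F hFc hF1
    refine ⟨∑ i, w i • (i : X), ?_⟩
    have hw0 : ∀ i, 0 ≤ w i := fun i => by rw [← hw]; exact hF0 w i
    have hws : ∑ i, w i = 1 := by
      conv_lhs => rw [← hw]
      exact hFs w
    change ‖∑ i, w i • (i : X) - σ w‖ ≤ ε
    have h1 : ∑ i, w i • (i : X) - σ w = ∑ i, w i • ((i : X) - σ w) := by
      simp_rw [smul_sub]
      rw [Finset.sum_sub_distrib, ← Finset.sum_smul, hws, one_smul]
    rw [h1]
    calc ‖∑ i, w i • ((i : X) - σ w)‖ ≤ ∑ i, ‖w i • ((i : X) - σ w)‖ := norm_sum_le _ _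
      _ ≤ ∑ i, w i * ε := by
          refine Finset.sum_le_sum fun i _ => ?_
          rw [norm_smul, Real.norm_of_nonneg (hw0 i)]
          by_cases hi : ‖σ w - i‖ ≤ ε
          · rw [norm_sub_rev]
            exact mul_le_mul_of_nonneg_left hi (hw0 i)
          · have : w i = 0 := by
              rw [← hw]
              have : φ (σ w) i = 0 := max_eq_left (by linarith)
              simp [F, this]
            simp [this]
      _ = ε := by rw [← Finset.sum_mul, hws, one_mul]
  choose x hx using fun n : ℕ => key (1 / ((n : ℝ) + 1)) (by positivity)
  obtain ⟨z, -, ψ, hψ, hlim⟩ := hK.tendsto_subseq (fun n => hTK (x n))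
  have h0 : Tendsto (fun n => x (ψ n) - T (x (ψ n))) atTop (𝓝 0) := by
    refine squeeze_zero_norm (fun n => hx (ψ n)) ?_
    exact tendsto_one_div_add_atTop_nhds_zero_nat.comp hψ.tendsto_atTop
  have hxz : Tendsto (fun n => x (ψ n)) atTop (𝓝 z) := by
    have := h0.add hlim
    simpa using this
  refine ⟨z, tendsto_nhds_unique ((hT.tendsto z).comp hxz) hlim⟩

end Brouwer


section BVP

open MeasureTheory Topology

/-- Primitive vanishing at zero. -/
noncomputable def prim (h : ℝ → ℝ) : ℝ → ℝ := fun t => ∫ s in (0 : ℝ)..t, h s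

lemma prim_hasDerivAt {h : ℝ → ℝ} (hh : Continuous h) (t : ℝ) : HasDerivAt (prim h) (h t) t :=
  integral_hasDerivAt_right (hh.intervalIntegrable _ _)
    hh.aestronglyMeasurable.stronglyMeasurableAtFilter hh.continuousAt

lemma prim_continuous {h : ℝ → ℝ} (hh : Continuous h) : Continuous (prim h) :=
  continuous_iff_continuousAt.2 fun t => (prim_hasDerivAt hh t).continuousAt

lemma prim_iter_continuous {h : ℝ → ℝ} (hh : Continuous h) (k : ℕ) : Continuous (prim^[k] h) := by
  induction k with
  | zero => simpa
  | succ k ih => rw [Function.iterate_succ_apply']; exact prim_continuous ih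

lemma prim_iter_zero (h : ℝ → ℝ) (k : ℕ) : (prim^[k + 1] h) 0 = 0 := by
  rw [Function.iterate_succ_apply']; simp [prim]

/-- Cauchy formula for repeated integration. -/
lemma cauchy_repeated (k : ℕ) : ∀ {h : ℝ → ℝ}, Continuous h → ∀ t : ℝ,
    ∫ s in (0 : ℝ)..t, (t - s) ^ k / (k.factorial : ℝ) * h s = (prim^[k + 1] h) t := by
  induction k with
  | zero => intro h hh t; simp [prim]
  | succ k ih =>
    intro h hh t
    rw [Function.iterate_succ_apply, ← ih (prim_continuous hh) t]
    have hu : ∀ s ∈ uIcc 0 t, HasDerivAt (fun s => (t - s) ^ (k + 1) / ((k + 1).factorial : ℝ))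
        (-((t - s) ^ k / (k.factorial : ℝ))) s := by
      intro s _
      have h1 := (((hasDerivAt_id s).const_sub t).pow (k + 1)).div_const ((k + 1).factorial : ℝ)
      refine h1.congr_deriv ?_
      rw [Nat.factorial_succ]
      have : (k.factorial : ℝ) ≠ 0 := by positivity
      push_cast
      simp
      field_simp
    have := integral_mul_deriv_eq_deriv_mul hu (fun s _ => prim_hasDerivAt hh s)
      (Continuous.intervalIntegrable (by fun_prop) _ _) (hh.intervalIntegrable _ _)
    rw [this]
    simp [prim]

lemma chain_contDiff (n : ℕ) : ∀ (f : ℕ → ℝ → ℝ)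
    (_ : ∀ i < n, ∀ t, HasDerivAt (f i) (f (i + 1) t) t) (_ : Continuous (f n)),
    ContDiff ℝ n (f 0) := by
  induction n with
  | zero => intro f _ hc; simpa [contDiff_zero] using hc
  | succ n ih =>
    intro f hf hc
    have h1 : deriv (f 0) = f 1 := funext fun t => (hf 0 (by omega) t).deriv
    push_cast
    rw [contDiff_succ_iff_deriv]
    refine ⟨fun t => (hf 0 (by omega) t).differentiableAt, by simp, ?_⟩
    rw [h1]
    exact ih (fun i => f (i + 1)) (fun i hi t => hf (i + 1) (by omega) t) hc

lemma chain_iteratedDeriv (n : ℕ) (f : ℕ → ℝ → ℝ)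
    (hf : ∀ i < n, ∀ t, HasDerivAt (f i) (f (i + 1) t) t) (i : ℕ) (hi : i ≤ n) :
    iteratedDeriv i (f 0) = f i := by
  induction i with
  | zero => simp
  | succ i ih =>
    rw [iteratedDeriv_succ, ih (by omega)]
    exact funext fun t => (hf i (by omega) t).deriv

/-- The Green kernel in a unified form. -/
noncomputable def ker6 (t s : ℝ) : ℝ := (t ^ 5 * (1 - s) ^ 3 - (max (t - s) 0) ^ 5) / 120

noncomputable def W (h : ℝ → ℝ) (t : ℝ) : ℝ := ∫ s in (0 : ℝ)..1, ker6 t s * h s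

lemma ker6_continuous : Continuous (fun q : ℝ × ℝ => ker6 q.1 q.2) := by
  unfold ker6; fun_prop

lemma ker6_continuous_right (t : ℝ) : Continuous (ker6 t) := by
  unfold ker6; fun_prop

lemma W_continuous {h : ℝ → ℝ} (hh : Continuous h) : Continuous (W h) := by
  unfold W
  apply intervalIntegral.continuous_parametric_intervalIntegral_of_continuous'
  have := ker6_continuous
  exact this.mul (hh.comp continuous_snd)

lemma W_int {h : ℝ → ℝ} (hh : Continuous h) (t : ℝ) (a b : ℝ) :
    IntervalIntegrable (fun s => ker6 t s * h s) volume a b :=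
  ((ker6_continuous_right t).mul hh).intervalIntegrable _ _

lemma W_sub {h₁ h₂ : ℝ → ℝ} (hh₁ : Continuous h₁) (hh₂ : Continuous h₂) (t : ℝ) :
    W (fun s => h₁ s - h₂ s) t = W h₁ t - W h₂ t := by
  unfold W
  rw [← intervalIntegral.integral_sub (W_int hh₁ t 0 1) (W_int hh₂ t 0 1)]
  congr 1; ext s; ring

lemma split_max (k : ℕ) {φ : ℝ → ℝ} (hφ : Continuous φ) (t : ℝ) (ht : t ∈ Icc (0 : ℝ) 1) :
    ∫ s in (0 : ℝ)..1, (max (t - s) 0) ^ (k + 1) * φ s = ∫ s in (0 : ℝ)..t, (t - s) ^ (k + 1) * φ s := by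
  have hi : ∀ a b, IntervalIntegrable (fun s => (max (t - s) 0) ^ (k + 1) * φ s) volume a b :=
    fun a b => Continuous.intervalIntegrable (by fun_prop) _ _
  rw [← integral_add_adjacent_intervals (hi 0 t) (hi t 1)]
  have h1 : ∫ s in t..1, (max (t - s) 0) ^ (k + 1) * φ s = 0 := by
    rw [intervalIntegral.integral_congr (g := fun _ => (0 : ℝ))]
    · simp
    · intro s hs
      rw [uIcc_of_le ht.2] at hs
      simp only
      rw [max_eq_right (by linarith [hs.1])]
      simp
  rw [h1, add_zero]
  apply intervalIntegral.integral_congr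
  intro s hs
  rw [uIcc_of_le ht.1] at hs
  simp only
  rw [max_eq_left (by linarith [hs.2])]

lemma W_eq {h : ℝ → ℝ} (hh : Continuous h) (t : ℝ) (ht : t ∈ Icc (0 : ℝ) 1) :
    W h t = (prim^[4] h) 1 / 20 * t ^ 5 - (prim^[6] h) t := by
  rw [← cauchy_repeated 3 hh 1, ← cauchy_repeated 5 hh t]
  have h1 : W h t = (∫ s in (0 : ℝ)..1, t ^ 5 / 20 * ((1 - s) ^ 3 / ((Nat.factorial 3 : ℕ) : ℝ) * h s))
      - ∫ s in (0 : ℝ)..1, (max (t - s) 0) ^ (4 + 1) * (h s / 120) := by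
    unfold W ker6
    rw [← intervalIntegral.integral_sub (Continuous.intervalIntegrable (by fun_prop) _ _)
      (Continuous.intervalIntegrable (by fun_prop) _ _)]
    congr 1; ext s
    simp [Nat.factorial]; ring
  rw [h1, split_max 4 (by fun_prop) t ht, intervalIntegral.integral_const_mul]
  congr 1
  · ring
  · congr 1; ext s; simp [Nat.factorial]; ring

lemma ker6_nonneg {t s : ℝ} (ht : t ∈ Icc (0 : ℝ) 1) (hs : s ∈ Icc (0 : ℝ) 1) : 0 ≤ ker6 t s := by
  obtain ⟨ht0, ht1⟩ := ht
  obtain ⟨hs0, hs1⟩ := hs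
  unfold ker6
  have h1 : 0 ≤ 1 - s := by linarith
  rcases le_total t s with hts | hts
  · rw [max_eq_right (by linarith)]
    have : 0 ≤ t ^ 5 * (1 - s) ^ 3 := by positivity
    norm_num; linarith
  · rw [max_eq_left (by linarith)]
    have hx : 0 ≤ t - s := by linarith
    have h2 : t - s ≤ t * (1 - s) := by nlinarith
    have h3 : (t - s) ^ 3 ≤ (t * (1 - s)) ^ 3 := pow_le_pow_left₀ hx h2 3
    have h4 : (t - s) ^ 2 ≤ t ^ 2 := pow_le_pow_left₀ hx (by linarith) 2
    have h5 : (t - s) ^ 3 * (t - s) ^ 2 ≤ (t * (1 - s)) ^ 3 * t ^ 2 :=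
      mul_le_mul h3 h4 (by positivity) (by positivity)
    have h6 : (t - s) ^ 5 ≤ t ^ 5 * (1 - s) ^ 3 := by
      calc (t - s) ^ 5 = (t - s) ^ 3 * (t - s) ^ 2 := by ring
        _ ≤ (t * (1 - s)) ^ 3 * t ^ 2 := h5
        _ = _ := by ring
    linarith

lemma ker6_lip {t t' s : ℝ} (ht : t ∈ Icc (0 : ℝ) 1) (ht' : t' ∈ Icc (0 : ℝ) 1)
    (hs : s ∈ Icc (0 : ℝ) 1) : |ker6 t s - ker6 t' s| ≤ |t - t'| / 12 := by
  have pw : ∀ a b : ℝ, a ∈ Icc (0 : ℝ) 1 → b ∈ Icc (0 : ℝ) 1 → |a ^ 5 - b ^ 5| ≤ 5 * |a - b| := by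
    intro a b ha hb
    obtain ⟨ha0, ha1⟩ := ha
    obtain ⟨hb0, hb1⟩ := hb
    have : a ^ 5 - b ^ 5 = (a ^ 4 + a ^ 3 * b + a ^ 2 * b ^ 2 + a * b ^ 3 + b ^ 4) * (a - b) := by
      ring
    rw [this, abs_mul, abs_of_nonneg (by positivity)]
    refine mul_le_mul_of_nonneg_right ?_ (abs_nonneg _)
    have e1 : a ^ 4 ≤ 1 := pow_le_one₀ ha0 ha1
    have e2 : a ^ 3 * b ≤ 1 := mul_le_one₀ (pow_le_one₀ ha0 ha1) hb0 hb1
    have e3 : a ^ 2 * b ^ 2 ≤ 1 := mul_le_one₀ (pow_le_one₀ ha0 ha1) (by positivity) (pow_le_one₀ hb0 hb1)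
    have e4 : a * b ^ 3 ≤ 1 := mul_le_one₀ ha1 (by positivity) (pow_le_one₀ hb0 hb1)
    have e5 : b ^ 4 ≤ 1 := pow_le_one₀ hb0 hb1
    linarith
  have h1 := pw t t' ht ht'
  have h2 := pw (max (t - s) 0) (max (t' - s) 0)
    ⟨le_max_right _ _, max_le (by linarith [ht.2, hs.1]) zero_le_one⟩
    ⟨le_max_right _ _, max_le (by linarith [ht'.2, hs.1]) zero_le_one⟩
  have h3 : |max (t - s) 0 - max (t' - s) 0| ≤ |t - t'| := by
    have := abs_max_sub_max_le_abs (t - s) (t' - s) 0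
    simpa using this
  have h4 : |(1 - s) ^ 3| ≤ 1 := by
    rw [abs_of_nonneg (pow_nonneg (by linarith [hs.2]) 3)]
    exact pow_le_one₀ (by linarith [hs.2]) (by linarith [hs.1])
  have e : ker6 t s - ker6 t' s = ((t ^ 5 - t' ^ 5) * (1 - s) ^ 3
      - ((max (t - s) 0) ^ 5 - (max (t' - s) 0) ^ 5)) / 120 := by unfold ker6; ring
  rw [e, abs_div, abs_of_pos (show (0 : ℝ) < 120 by norm_num)]
  have h5 := abs_sub ((t ^ 5 - t' ^ 5) * (1 - s) ^ 3) ((max (t - s) 0) ^ 5 - (max (t' - s) 0) ^ 5)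
  rw [abs_mul] at h5
  have h6 : |t ^ 5 - t' ^ 5| * |(1 - s) ^ 3| ≤ |t ^ 5 - t' ^ 5| :=
    mul_le_of_le_one_right (abs_nonneg _) h4
  rw [div_le_div_iff₀ (by norm_num) (by norm_num)]
  linarith

lemma ker6_integral {t : ℝ} (ht : t ∈ Icc (0 : ℝ) 1) :
    ∫ s in (0 : ℝ)..1, ker6 t s = t ^ 5 / 480 - t ^ 6 / 720 := by
  have h1 := W_eq (h := fun _ => (1 : ℝ)) continuous_const t ht
  have pp : ∀ (k : ℕ) (c : ℝ), prim (fun t => c * t ^ k) = fun t => c / (k + 1) * t ^ (k + 1) := by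
    intro k c; ext x; simp [prim, integral_pow]; ring
  have e0 : (fun _ : ℝ => (1 : ℝ)) = fun t => 1 * t ^ 0 := by ext; simp
  have hi4 : (prim^[4] fun _ : ℝ => (1 : ℝ)) 1 = 1 / 24 := by
    simp only [Function.iterate_succ, Function.iterate_zero, Function.comp_apply, id]
    rw [e0, pp, pp, pp, pp]; norm_num
  have hi6 : (prim^[6] fun _ : ℝ => (1 : ℝ)) t = t ^ 6 / 720 := by
    simp only [Function.iterate_succ, Function.iterate_zero, Function.comp_apply, id]
    rw [e0, pp, pp, pp, pp, pp, pp]; norm_num; ring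
  rw [hi4, hi6] at h1
  simp only [W, mul_one] at h1
  rw [h1]; ring

lemma G_integral : ∫ s in (0 : ℝ)..1, G 1 s = 1 / 1440 := by
  have : ∫ s in (0 : ℝ)..1, G 1 s = ∫ s in (0 : ℝ)..1, ker6 1 s := by
    apply intervalIntegral.integral_congr
    intro s hs
    rw [uIcc_of_le zero_le_one] at hs
    simp only [G, ker6, if_pos hs.2]
    rw [max_eq_left (by linarith [hs.2])]
  rw [this, ker6_integral (by simp)]; norm_num

lemma W_bound {h : ℝ → ℝ} (hh : Continuous h) {H : ℝ} (hH : ∀ s ∈ Icc (0 : ℝ) 1, |h s| ≤ H)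
    {t : ℝ} (ht : t ∈ Icc (0 : ℝ) 1) : |W h t| ≤ H / 1440 := by
  have hH0 : 0 ≤ H := (abs_nonneg _).trans (hH 0 (by simp))
  have h1 : |W h t| ≤ ∫ s in (0 : ℝ)..1, ker6 t s * H := by
    unfold W
    rw [← Real.norm_eq_abs]
    refine intervalIntegral.norm_integral_le_of_norm_le zero_le_one ?_
      (Continuous.intervalIntegrable ((ker6_continuous_right t).mul continuous_const) _ _)
    refine Eventually.of_forall fun s hs => ?_
    have hs' : s ∈ Icc (0 : ℝ) 1 := ⟨hs.1.le, hs.2⟩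
    rw [norm_mul, Real.norm_of_nonneg (ker6_nonneg ht hs')]
    exact mul_le_mul_of_nonneg_left (hH s hs') (ker6_nonneg ht hs')
  rw [intervalIntegral.integral_mul_const, ker6_integral ht] at h1
  have h2 : t ^ 5 / 480 - t ^ 6 / 720 ≤ 1 / 1440 := by
    obtain ⟨h0, h1⟩ := ht
    have e : 1 - 3 * t ^ 5 + 2 * t ^ 6 = (1 - t) * ((1 - t ^ 5) + (t - t ^ 5) + t ^ 2 +
      t ^ 3 + t ^ 4) := by ring
    have a1 : t ^ 5 ≤ 1 := pow_le_one₀ h0 h1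
    have a2 : t ^ 5 ≤ t := by simpa using pow_le_pow_of_le_one h0 h1 (show 1 ≤ 5 by norm_num)
    have a3 : 0 ≤ t ^ 2 + t ^ 3 + t ^ 4 := by positivity
    have : 0 ≤ 1 - 3 * t ^ 5 + 2 * t ^ 6 := by
      rw [e]; exact mul_nonneg (by linarith) (by linarith)
    linarith
  have := mul_le_mul_of_nonneg_right h2 hH0
  linarith

lemma W_lip {h : ℝ → ℝ} (hh : Continuous h) {H : ℝ} (hH : ∀ s ∈ Icc (0 : ℝ) 1, |h s| ≤ H)
    {t t' : ℝ} (ht : t ∈ Icc (0 : ℝ) 1) (ht' : t' ∈ Icc (0 : ℝ) 1) :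
    |W h t - W h t'| ≤ H / 12 * |t - t'| := by
  unfold W
  rw [← intervalIntegral.integral_sub (W_int hh t 0 1) (W_int hh t' 0 1)]
  have := intervalIntegral.norm_integral_le_of_norm_le_const (a := 0) (b := 1)
    (f := fun s => ker6 t s * h s - ker6 t' s * h s) (C := H / 12 * |t - t'|) ?_
  · simpa using this
  · intro s hs
    rw [uIoc_of_le zero_le_one] at hs
    have hs' : s ∈ Icc (0 : ℝ) 1 := ⟨hs.1.le, hs.2⟩
    rw [← sub_mul, norm_mul, Real.norm_eq_abs, Real.norm_eq_abs]
    have := mul_le_mul (ker6_lip ht ht' hs') (hH s hs') (abs_nonneg _) (by positivity)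
    linarith

lemma compact_lip (R L : ℝ) : IsCompact {v : C(Icc (0 : ℝ) 1, ℝ) |
    (∀ t, |v t| ≤ R) ∧ ∀ t t', |v t - v t'| ≤ L * |(t : ℝ) - t'|} := by
  set K := {v : C(Icc (0 : ℝ) 1, ℝ) |
    (∀ t, |v t| ≤ R) ∧ ∀ t t', |v t - v t'| ≤ L * |(t : ℝ) - t'|} with hK
  have hlip : ∀ f : Icc (0 : ℝ) 1 → ℝ, (∀ t t', |f t - f t'| ≤ L * |(t : ℝ) - t'|) →
      LipschitzWith L.toNNReal f := by
    intro f hf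
    refine LipschitzWith.of_dist_le_mul fun t t' => ?_
    rw [Real.dist_eq, Subtype.dist_eq, Real.dist_eq]
    exact (hf t t').trans (mul_le_mul_of_nonneg_right (Real.le_coe_toNNReal L) (abs_nonneg _))
  apply ArzelaAscoli.isCompact_of_equicontinuous
  · have : ContinuousMap.toFun '' K = (Set.pi univ fun _ => Icc (-R) R) ∩
        {f : Icc (0 : ℝ) 1 → ℝ | ∀ t t', |f t - f t'| ≤ L * |(t : ℝ) - t'|} := by
      ext f
      constructor
      · rintro ⟨v, hv, rfl⟩
        exact ⟨fun t _ => abs_le.1 (hv.1 t), hv.2⟩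
      · rintro ⟨h1, h2⟩
        exact ⟨⟨f, (hlip f h2).continuous⟩, ⟨fun t => abs_le.2 (h1 t (mem_univ t)), h2⟩, rfl⟩
    rw [this]
    refine (isCompact_univ_pi fun _ => isCompact_Icc).inter_right ?_
    simp only [ofPred_forall]
    refine isClosed_iInter fun t => isClosed_iInter fun t' => ?_
    exact isClosed_le (by fun_prop) continuous_const
  · exact (LipschitzWith.uniformEquicontinuous _ L.toNNReal
      (fun v : K => hlip _ v.2.2)).equicontinuous


/-- The multi-point functional. -/
noncomputable def Lam (m : ℕ) (α β η : ℕ → ℝ) (w : ℝ → ℝ) : ℝ :=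
  (∑ i ∈ Finset.Icc 1 (m - 1), α i * ∫ s in (η i)..(η (i + 1)), w s) +
        ∑ i ∈ Finset.Icc 1 m, β i * w (η i)

lemma Lam_sub (m : ℕ) (α β η : ℕ → ℝ) {w₁ w₂ : ℝ → ℝ} (h₁ : Continuous w₁) (h₂ : Continuous w₂) :
    Lam m α β η (fun t => w₁ t - w₂ t) = Lam m α β η w₁ - Lam m α β η w₂ := by
  unfold Lam
  simp_rw [intervalIntegral.integral_sub (h₁.intervalIntegrable _ _) (h₂.intervalIntegrable _ _),
    mul_sub]
  rw [Finset.sum_sub_distrib, Finset.sum_sub_distrib]; ring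

lemma Lam_const_add (m : ℕ) (α β η : ℕ → ℝ) (a : ℝ) {w : ℝ → ℝ} (h : Continuous w) :
    Lam m α β η (fun t => a + w t) = a * ((∑ i ∈ Finset.Icc 1 (m - 1), α i * (η (i + 1) - η i)) +
      ∑ i ∈ Finset.Icc 1 m, β i) + Lam m α β η w := by
  unfold Lam
  simp_rw [intervalIntegral.integral_add (continuous_const.intervalIntegrable _ _)
    (h.intervalIntegrable _ _), mul_add]
  rw [Finset.sum_add_distrib, Finset.sum_add_distrib, Finset.mul_sum, Finset.mul_sum]
  simp only [intervalIntegral.integral_const, smul_eq_mul]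
  have e1 : ∀ i, α i * ((η (i + 1) - η i) * a) = a * (α i * (η (i + 1) - η i)) := fun i => by ring
  have e2 : ∀ i, β i * a = a * β i := fun i => by ring
  simp_rw [e1, e2]; ring

lemma eta_mem (m : ℕ) (η : ℕ → ℝ) (hη0 : 0 < η 1) (hηm : η m ≤ 1)
    (hηmono : ∀ i, 1 ≤ i → i < m → η i < η (i + 1)) (i : ℕ) (h1 : 1 ≤ i) (hi : i ≤ m) :
    η i ∈ Icc (0 : ℝ) 1 := by
  constructor
  · induction i, h1 using Nat.le_induction with
    | base => exact hη0.le
    | succ k hk ih => exact (ih (by omega)).trans (hηmono k hk (by omega)).le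
  · refine le_trans ?_ hηm
    have : ∀ j, i ≤ j → j ≤ m → η i ≤ η j := by
      intro j hj
      induction j, hj using Nat.le_induction with
      | base => intro _; exact le_rfl
      | succ k hk ih => intro hk'; exact (ih (by omega)).trans (hηmono k (by omega) (by omega)).le
    exact this m hi le_rfl

lemma Lam_bound (m : ℕ) (α β η : ℕ → ℝ) (hη0 : 0 < η 1) (hηm : η m ≤ 1)
    (hηmono : ∀ i, 1 ≤ i → i < m → η i < η (i + 1)) {w : ℝ → ℝ} {C : ℝ}
    (hw : ∀ t ∈ Icc (0 : ℝ) 1, |w t| ≤ C) :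
    |Lam m α β η w| ≤ ((∑ i ∈ Finset.Icc 1 (m - 1), |α i| * (η (i + 1) - η i))
          + ∑ i ∈ Finset.Icc 1 m, |β i|) * C := by
  unfold Lam
  refine (abs_add_le _ _).trans ?_
  rw [add_mul, Finset.sum_mul, Finset.sum_mul]
  refine add_le_add ((Finset.abs_sum_le_sum_abs _ _).trans (Finset.sum_le_sum fun i hi => ?_))
    ((Finset.abs_sum_le_sum_abs _ _).trans (Finset.sum_le_sum fun i hi => ?_))
  · rw [Finset.mem_Icc] at hi
    have hlt := hηmono i hi.1 (by omega)
    have m1 := eta_mem m η hη0 hηm hηmono i hi.1 (by omega)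
    have m2 := eta_mem m η hη0 hηm hηmono (i + 1) (by omega) (by omega)
    rw [abs_mul, mul_assoc]
    refine mul_le_mul_of_nonneg_left ?_ (abs_nonneg _)
    have := intervalIntegral.norm_integral_le_of_norm_le_const (a := η i) (b := η (i + 1))
      (f := w) (C := C) ?_
    · rw [abs_of_pos (sub_pos.2 hlt), mul_comm] at this
      exact this
    · intro s hs
      rw [uIoc_of_le hlt.le] at hs
      exact hw s ⟨m1.1.trans hs.1.le, hs.2.trans m2.2⟩
  · rw [Finset.mem_Icc] at hi
    rw [abs_mul]
    exact mul_le_mul_of_nonneg_left (hw _ (eta_mem m η hη0 hηm hηmono i hi.1 hi.2)) (abs_nonneg _)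

/-- Linear growth from the asymptotic slope. -/
lemma growth {g : ℝ → ℝ} (hg : Continuous g) {γ c : ℝ} (hc : |γ| < c)
    (hγlim : Tendsto (fun x : ℝ => g x / x) (Filter.cocompact ℝ) (nhds γ)) :
    ∃ C, 0 ≤ C ∧ ∀ x, |g x| ≤ c * |x| + C := by
  have hc0 : 0 ≤ c := (abs_nonneg _).trans hc.le
  have h1 : ∀ᶠ x in Filter.cocompact ℝ, |g x / x| < c :=
    (continuous_abs.tendsto γ |>.comp hγlim).eventually_lt_const hc
  rw [Filter.eventually_iff, Filter.mem_cocompact] at h1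
  obtain ⟨S, hS, hsub⟩ := h1
  obtain ⟨C, hC⟩ := (hS.insert 0).exists_bound_of_continuousOn hg.continuousOn
  refine ⟨C, (norm_nonneg _).trans (hC 0 (mem_insert _ _)), fun x => ?_⟩
  have hC0 := (norm_nonneg _).trans (hC 0 (mem_insert _ _))
  by_cases hx : x ∈ insert 0 S
  · have := hC x hx
    rw [Real.norm_eq_abs] at this
    have : 0 ≤ c * |x| := by positivity
    linarith
  · rw [mem_insert_iff, not_or] at hx
    have h2 : |g x / x| < c := hsub hx.2
    rw [abs_div, div_lt_iff₀ (abs_pos.2 hx.1)] at h2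
    linarith

/-- Existence of a solution to the integral equation. -/
lemma exists_integral_solution (m : ℕ) (α β η : ℕ → ℝ) (hη0 : 0 < η 1) (hηm : η m ≤ 1)
    (hηmono : ∀ i, 1 ≤ i → i < m → η i < η (i + 1)) (μ : ℝ)
    (P : ℝ → ℝ) (hP : Continuous P) (g : ℝ → ℝ) (hg : Continuous g)
    (ps : ℝ) (hps : ∀ t ∈ Icc (0 : ℝ) 1, |P t| ≤ ps) (N : ℝ)
    (hN : N = 1 + (1 / |μ|) * ((∑ i ∈ Finset.Icc 1 (m - 1), |α i| * (η (i + 1) - η i))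
          + ∑ i ∈ Finset.Icc 1 m, |β i|))
    (R Q : ℝ) (hR : 0 ≤ R) (hQ : ∀ x ∈ Icc (-R) R, |g x| ≤ Q)
    (hRQ : N * (ps * Q / 1440) ≤ R) :
    ∃ v : ℝ → ℝ, Continuous v ∧ ∀ t ∈ Icc (0 : ℝ) 1,
      v t = 1 / μ * Lam m α β η (W (fun s => P s * g (v s))) + W (fun s => P s * g (v s)) t := by
  have hps0 : 0 ≤ ps := (abs_nonneg _).trans (hps 0 (by simp))
  let gt : ℝ → ℝ := fun x => g (max (-R) (min x R))
  have hgt : Continuous gt := by simp only [gt]; fun_prop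
  have hgtQ : ∀ x, |gt x| ≤ Q := fun x =>
    hQ _ ⟨le_max_left _ _, max_le (by linarith) (min_le_right _ _)⟩
  let ex : C(Icc (0 : ℝ) 1, ℝ) → ℝ → ℝ := fun v s => v (projIcc 0 1 zero_le_one s)
  have hex : ∀ v, Continuous (ex v) := fun v => v.continuous.comp continuous_projIcc
  let S : (ℝ → ℝ) → ℝ → ℝ := fun h t => 1 / μ * Lam m α β η (W h) + W h t
  have hSc : ∀ h, Continuous h → Continuous (S h) := fun h hh =>
    continuous_const.add (W_continuous hh)
  have hSb : ∀ h, Continuous h → ∀ H, (∀ s ∈ Icc (0 : ℝ) 1, |h s| ≤ H) →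
      ∀ t ∈ Icc (0 : ℝ) 1, |S h t| ≤ N * (H / 1440) := by
    intro h hh H hH t ht
    have h1 := Lam_bound m α β η hη0 hηm hηmono (fun t ht => W_bound hh hH ht)
    have h2 := W_bound hh hH ht
    refine (abs_add_le _ _).trans ?_
    rw [abs_mul, abs_div, abs_one, hN]
    have := mul_le_mul_of_nonneg_left h1 (show 0 ≤ 1 / |μ| by positivity)
    linarith
  have hSsub : ∀ h₁ h₂, Continuous h₁ → Continuous h₂ → ∀ t,
      S (fun s => h₁ s - h₂ s) t = S h₁ t - S h₂ t := by
    intro h₁ h₂ c₁ c₂ t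
    have e : W (fun s => h₁ s - h₂ s) = fun t => W h₁ t - W h₂ t := funext (W_sub c₁ c₂)
    simp only [S, e]
    rw [Lam_sub m α β η (W_continuous c₁) (W_continuous c₂)]; ring
  let hv : C(Icc (0 : ℝ) 1, ℝ) → ℝ → ℝ := fun v s => P s * gt (ex v s)
  have hvc : ∀ v, Continuous (hv v) := fun v => hP.mul (hgt.comp (hex v))
  have hvb : ∀ v, ∀ s ∈ Icc (0 : ℝ) 1, |hv v s| ≤ ps * Q := by
    intro v s hs
    simp only [hv]
    rw [abs_mul]
    exact mul_le_mul (hps s hs) (hgtQ _) (abs_nonneg _) hps0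
  let T : C(Icc (0 : ℝ) 1, ℝ) → C(Icc (0 : ℝ) 1, ℝ) := fun v =>
    ⟨fun t => S (hv v) t, (hSc _ (hvc v)).comp continuous_subtype_val⟩
  have hTK : ∀ v, T v ∈ {v : C(Icc (0 : ℝ) 1, ℝ) |
    (∀ t, |v t| ≤ R) ∧ ∀ t t', |v t - v t'| ≤ (ps * Q / 12) * |(t : ℝ) - t'|} := by
    intro v
    refine ⟨fun t => (hSb _ (hvc v) _ (hvb v) t t.2).trans hRQ, fun t t' => ?_⟩
    have := W_lip (hvc v) (hvb v) t.2 t'.2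
    simpa [T, S] using this
  have hTc : Continuous T := by
    let gc : C(ℝ, ℝ) := ⟨gt, hgt⟩
    have hpost : Continuous fun v : C(Icc (0 : ℝ) 1, ℝ) => gc.comp v := gc.continuous_postcomp
    rw [continuous_iff_continuousAt]
    intro v₀
    have hN0 : ∀ v, ‖T v - T v₀‖ ≤ |N * (ps / 1440)| * ‖gc.comp v - gc.comp v₀‖ := by
      intro v
      rw [ContinuousMap.norm_le _ (by positivity)]
      intro t
      have := hSb (fun s => hv v s - hv v₀ s) ((hvc v).sub (hvc v₀)) (ps * ‖gc.comp v - gc.comp v₀‖) (by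
        intro s hs
        simp only [hv]
        rw [← mul_sub, abs_mul]
        refine mul_le_mul (hps s hs) ?_ (abs_nonneg _) hps0
        exact (gc.comp v - gc.comp v₀).norm_coe_le_norm (projIcc 0 1 zero_le_one s)) t t.2
      rw [hSsub _ _ (hvc v) (hvc v₀)] at this
      calc ‖(T v - T v₀) t‖ ≤ N * (ps * ‖gc.comp v - gc.comp v₀‖ / 1440) := this
        _ = N * (ps / 1440) * ‖gc.comp v - gc.comp v₀‖ := by ring
        _ ≤ _ := mul_le_mul_of_nonneg_right (le_abs_self _) (norm_nonneg _)
    rw [ContinuousAt, tendsto_iff_norm_sub_tendsto_zero]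
    refine squeeze_zero (fun _ => norm_nonneg _) hN0 ?_
    have := (tendsto_iff_norm_sub_tendsto_zero.1 (hpost.tendsto v₀)).const_mul |N * (ps / 1440)|
    simpa using this
  obtain ⟨v, hfix⟩ := schauder T hTc _ (compact_lip R (ps * Q / 12)) hTK
  have hvR : ∀ t, |v t| ≤ R := by rw [← hfix]; exact (hTK v).1
  have hgv : hv v = fun s => P s * g (ex v s) := by
    ext s
    have h1 := abs_le.1 (hvR (projIcc 0 1 zero_le_one s))
    simp only [hv, gt]
    rw [min_eq_left h1.2, max_eq_right h1.1]
  refine ⟨ex v, hex v, fun t ht => ?_⟩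
  rw [← hgv]
  have h1 : ex v t = v ⟨t, ht⟩ := by simp only [ex]; rw [projIcc_of_mem]
  rw [h1]
  conv_lhs => rw [← hfix]
  rfl

end BVP


/-- **Existence of a nontrivial solution** (via the Krasnoselskii–Zabreiko fixed point
theorem): under the asymptotic linearity condition on `g` and the smallness condition
`|γ| < 1/M`, the sixth-order boundary value problem `u⁽⁶⁾ + p(t) g(u) = 0` with the
multi-point and multi-term integral boundary conditions has at least one nontrivial
solution. -/
theorem exists_nontrivial_solution
    (m : ℕ) (hm : 2 ≤ m) (α β η : ℕ → ℝ)
    (hη0 : 0 < η 1) (hηm : η m ≤ 1)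
    (hηmono : ∀ i, 1 ≤ i → i < m → η i < η (i + 1))
    (μ : ℝ)
    (hμdef : μ = 1 - ((∑ i ∈ Finset.Icc 1 (m - 1), α i * (η (i + 1) - η i)) +
      ∑ i ∈ Finset.Icc 1 m, β i))
    (hμ : μ ≠ 0)
    (p : ℝ → ℝ) (hp : ContinuousOn p (Icc 0 1))
    (g : ℝ → ℝ) (hg : Continuous g)
    (γ : ℝ) (hγlim : Tendsto (fun x : ℝ => g x / x) (Filter.cocompact ℝ) (nhds γ))
    (t₀ : ℝ) (ht₀ : t₀ ∈ Ioc (0 : ℝ) 1) (hnz : p t₀ * g 0 ≠ 0)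
    (pstar : ℝ) (hpstar : pstar = sSup ((fun t => |p t|) '' Icc (0 : ℝ) 1))
    (M : ℝ)
    (hM : M = pstar * (1 + (1 / |μ|) * ∑ i ∈ Finset.Icc 1 (m - 1),
            |α i| * (η (i + 1) - η i)
          + (1 / |μ|) * ∑ i ∈ Finset.Icc 1 m, |β i|) * ∫ s in (0 : ℝ)..1, G 1 s)
    (hγ : |γ| < 1 / M) :
    ∃ u : ℝ → ℝ, ContDiffOn ℝ 6 u (Icc 0 1) ∧
      (∃ t ∈ Icc (0 : ℝ) 1, u t ≠ 0) ∧
      (∀ t ∈ Ioo (0 : ℝ) 1, iteratedDerivWithin 6 u (Icc 0 1) t + p t * g (u t) = 0) ∧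
      iteratedDerivWithin 1 u (Icc 0 1) 0 = 0 ∧
      iteratedDerivWithin 2 u (Icc 0 1) 0 = 0 ∧
      iteratedDerivWithin 3 u (Icc 0 1) 0 = 0 ∧
      iteratedDerivWithin 4 u (Icc 0 1) 0 = 0 ∧
      iteratedDerivWithin 2 u (Icc 0 1) 1 = 0 ∧
      u 0 = (∑ i ∈ Finset.Icc 1 (m - 1), α i * ∫ s in (η i)..(η (i + 1)), u s) +
        ∑ i ∈ Finset.Icc 1 m, β i * u (η i) := by
  -- extend `p`
  let P : ℝ → ℝ := IccExtend (zero_le_one (α := ℝ)) (domRestrict (Icc 0 1) p)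
  have hP : Continuous P := (continuousOn_iff_continuous_domRestrict.1 hp).Icc_extend'
  have hPp : ∀ t ∈ Icc (0 : ℝ) 1, P t = p t := fun t ht => by
    simp only [P]; rw [IccExtend_of_mem _ _ ht]; rfl
  have ht₀' : t₀ ∈ Icc (0 : ℝ) 1 := ⟨ht₀.1.le, ht₀.2⟩
  have hbdd : BddAbove ((fun t => |p t|) '' Icc (0 : ℝ) 1) :=
    (isCompact_Icc.image_of_continuousOn hp.abs).bddAbove
  have hps : ∀ t ∈ Icc (0 : ℝ) 1, |P t| ≤ pstar := fun t ht => by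
    rw [hPp t ht, hpstar]; exact le_csSup hbdd ⟨t, ht, rfl⟩
  have hpt₀ : p t₀ ≠ 0 := left_ne_zero_of_mul hnz
  have hg0 : g 0 ≠ 0 := right_ne_zero_of_mul hnz
  have hps0 : 0 < pstar := by
    have := hps t₀ ht₀'
    rw [hPp t₀ ht₀'] at this
    exact (abs_pos.2 hpt₀).trans_le this
  set N : ℝ := 1 + (1 / |μ|) * ((∑ i ∈ Finset.Icc 1 (m - 1), |α i| * (η (i + 1) - η i))
          + ∑ i ∈ Finset.Icc 1 m, |β i|) with hN
  have hMN : M = pstar * N / 1440 := by rw [hM, G_integral, hN]; ring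
  have hN1 : 1 ≤ N := by
    have h1 : 0 ≤ ∑ i ∈ Finset.Icc 1 (m - 1), |α i| * (η (i + 1) - η i) := by
      refine Finset.sum_nonneg fun i hi => mul_nonneg (abs_nonneg _) ?_
      rw [Finset.mem_Icc] at hi
      linarith [hηmono i hi.1 (by omega)]
    have h2 : 0 ≤ ∑ i ∈ Finset.Icc 1 m, |β i| := Finset.sum_nonneg fun i _ => abs_nonneg _
    have : 0 ≤ (1 / |μ|) * ((∑ i ∈ Finset.Icc 1 (m - 1), |α i| * (η (i + 1) - η i))
          + ∑ i ∈ Finset.Icc 1 m, |β i|) := by positivity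
    linarith
  have hM0 : 0 < M := by rw [hMN]; positivity
  obtain ⟨c, hc1, hc2⟩ := exists_between hγ
  have hcM : c * M < 1 := by rwa [lt_div_iff₀ hM0] at hc2
  obtain ⟨C, hC0, hgC⟩ := growth hg hc1 hγlim
  have hc0 : 0 ≤ c := (abs_nonneg _).trans hc1.le
  set R : ℝ := M * C / (1 - c * M) with hRdef
  have h1cM : 0 < 1 - c * M := by linarith
  have hR0 : 0 ≤ R := by positivity
  have hReq : M * (c * R + C) = R := by
    have : R * (1 - c * M) = M * C := by rw [hRdef]; exact div_mul_cancel₀ _ h1cM.ne'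
    linarith
  obtain ⟨v, hvc, hv⟩ := exists_integral_solution m α β η hη0 hηm hηmono μ P hP g hg pstar hps N hN
    R (c * R + C) hR0 (fun x hx => (hgC x).trans (by
      have := mul_le_mul_of_nonneg_left (abs_le.2 hx) hc0
      linarith)) (by
      have : N * (pstar * (c * R + C) / 1440) = M * (c * R + C) := by rw [hMN]; ring
      rw [this, hReq])
  set h : ℝ → ℝ := fun s => P s * g (v s) with hh
  have hhc : Continuous h := hP.mul (hg.comp hvc)
  set a : ℝ := 1 / μ * Lam m α β η (W h) with ha
  set K : ℝ := (prim^[4] h) 1 / 20 with hK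
  let f : ℕ → ℝ → ℝ := fun i => match i with
    | 0 => fun t => a + K * t ^ 5 - (prim^[6] h) t
    | 1 => fun t => 5 * K * t ^ 4 - (prim^[5] h) t
    | 2 => fun t => 20 * K * t ^ 3 - (prim^[4] h) t
    | 3 => fun t => 60 * K * t ^ 2 - (prim^[3] h) t
    | 4 => fun t => 120 * K * t - (prim^[2] h) t
    | 5 => fun t => 120 * K - (prim^[1] h) t
    | _ => fun t => - h t
  have hprim : ∀ k t, HasDerivAt (prim^[k + 1] h) ((prim^[k] h) t) t := by
    intro k t
    rw [Function.iterate_succ_apply']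
    exact prim_hasDerivAt (prim_iter_continuous hhc k) t
  have hmon : ∀ (k : ℕ) (c t : ℝ), HasDerivAt (fun t : ℝ => c * t ^ k) (c * (k * t ^ (k - 1))) t :=
    fun k c t => (hasDerivAt_pow k t).const_mul c
  have hf : ∀ i < 6, ∀ t, HasDerivAt (f i) (f (i + 1) t) t := by
    intro i hi t
    interval_cases i
    · refine (((hmon 5 K t).const_add a).sub (hprim 5 t)).congr_deriv ?_
      simp only [f]; norm_num; ring
    · refine ((hmon 4 (5 * K) t).sub (hprim 4 t)).congr_deriv ?_
      simp only [f]; norm_num; ring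
    · refine ((hmon 3 (20 * K) t).sub (hprim 3 t)).congr_deriv ?_
      simp only [f]; norm_num; ring
    · refine ((hmon 2 (60 * K) t).sub (hprim 2 t)).congr_deriv ?_
      simp only [f]; norm_num; ring
    · refine (((hasDerivAt_id t).const_mul (120 * K)).sub (hprim 1 t)).congr_deriv ?_
      simp only [f]; norm_num
    · refine ((hprim 0 t).const_sub (120 * K)).congr_deriv ?_
      simp only [f]; rfl
  have hcd : ContDiff ℝ 6 (f 0) := by
    have := chain_contDiff 6 f hf (by simp only [f]; exact hhc.neg)
    exact_mod_cast this
  have hder : ∀ i ≤ 6, ∀ t ∈ Icc (0 : ℝ) 1, iteratedDerivWithin i (f 0) (Icc 0 1) t = f i t := by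
    intro i hi t ht
    rw [iteratedDerivWithin_eq_iteratedDeriv (uniqueDiffOn_Icc zero_lt_one)
      ((hcd.of_le (by exact_mod_cast hi)).contDiffAt) ht, chain_iteratedDeriv 6 f hf i hi]
  have hfW : ∀ t ∈ Icc (0 : ℝ) 1, f 0 t = a + W h t := by
    intro t ht
    rw [W_eq hhc t ht]; simp only [f]; ring
  have hfv : ∀ t ∈ Icc (0 : ℝ) 1, f 0 t = v t := fun t ht => by rw [hfW t ht, hv t ht]
  have h0m : (0 : ℝ) ∈ Icc (0 : ℝ) 1 := by simp
  have h1m : (1 : ℝ) ∈ Icc (0 : ℝ) 1 := by simp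
  have hz : ∀ k, (prim^[k + 1] h) 0 = 0 := prim_iter_zero h
  refine ⟨f 0, hcd.contDiffOn, ?_, ?_, ?_, ?_, ?_, ?_, ?_, ?_⟩
  · by_contra hno
    push Not at hno
    have hP0 : ∀ t ∈ Icc (0 : ℝ) 1, P t = 0 := by
      intro t ht
      have h1 : iteratedDerivWithin 6 (f 0) (Icc 0 1) t = 0 := by
        rw [iteratedDerivWithin_congr (g := fun _ => (0 : ℝ)) (fun s hs => hno s hs) ht]
        simp
      rw [hder 6 le_rfl t ht] at h1
      have h2 : P t * g (v t) = 0 := neg_eq_zero.1 h1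
      rw [← hfv t ht, hno t ht] at h2
      exact (mul_eq_zero.1 h2).resolve_right hg0
    exact hpt₀ (by rw [← hPp t₀ ht₀']; exact hP0 t₀ ht₀')
  · intro t ht
    have ht' : t ∈ Icc (0 : ℝ) 1 := ⟨ht.1.le, ht.2.le⟩
    rw [hder 6 le_rfl t ht', hfv t ht', ← hPp t ht']
    simp [f, hh]
  · rw [hder 1 (by norm_num) 0 h0m]; simp only [f]; rw [hz 4]; norm_num
  · rw [hder 2 (by norm_num) 0 h0m]; simp only [f]; rw [hz 3]; norm_num
  · rw [hder 3 (by norm_num) 0 h0m]; simp only [f]; rw [hz 2]; norm_num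
  · rw [hder 4 (by norm_num) 0 h0m]; simp only [f]; rw [hz 1]; norm_num
  · rw [hder 2 (by norm_num) 1 h1m]; simp only [f]; rw [hK]; ring
  · change f 0 0 = Lam m α β η (f 0)
    have e0 : f 0 0 = a := by simp only [f]; rw [hz 5]; norm_num
    have e1 : Lam m α β η (f 0) = Lam m α β η (fun t => a + W h t) := by
      unfold Lam
      congr 1
      · refine Finset.sum_congr rfl fun i hi => ?_
        rw [Finset.mem_Icc] at hi
        have m1 := eta_mem m η hη0 hηm hηmono i hi.1 (by omega)
        have m2 := eta_mem m η hη0 hηm hηmono (i + 1) (by omega) (by omega)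
        congr 1
        refine intervalIntegral.integral_congr fun s hs => hfW s ?_
        rw [uIcc_of_le (hηmono i hi.1 (by omega)).le] at hs
        exact ⟨m1.1.trans hs.1, hs.2.trans m2.2⟩
      · refine Finset.sum_congr rfl fun i hi => ?_
        rw [Finset.mem_Icc] at hi
        rw [hfW _ (eta_mem m η hη0 hηm hηmono i hi.1 hi.2)]
    rw [e0, e1, Lam_const_add m α β η a (W_continuous hhc)]
    have e2 : Lam m α β η (W h) = μ * a := by rw [ha]; field_simp
    rw [e2]
    have e3 : (∑ i ∈ Finset.Icc 1 (m - 1), α i * (η (i + 1) - η i)) +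
      ∑ i ∈ Finset.Icc 1 m, β i = 1 - μ := by rw [hμdef]; ring
    rw [e3]; ring
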